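/- Let a > 0, take the prior to be the Beta(a,a) density, and set n_a = ⌊a⌋ and δ_a = a − ⌊a⌋ if a is not an integer, while n_a = a − 1 and δ_a = 1 if a is an integer. Then for every integer t ≥ 1 and every 0 ≤ s ≤ t, the optimal conditional complementary coverage probability satisfies 𝒞_t(s) ≥ 2·(0.25 − h²)^{δ_a}·(0.5 − h)^{t+2n_a} / ((t + 2n_a + 2δ_a)·Γ(δ_a)), where Γ is the Gamma function. -/

import Mathlib

open MeasureTheory Set


/-- `m_t(s) = ∫_0^1 θ^s (1-θ)^(t-s) π(θ) dθ`. -/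
noncomputable def margLik (π : ℝ → ℝ) (t s : ℕ) : ℝ :=
  ∫ θ in Ioc (0:ℝ) 1, θ ^ s * (1 - θ) ^ (t - s) * π θ

/-- Posterior density `π_t(θ|s)`. -/
noncomputable def postDens (π : ℝ → ℝ) (t s : ℕ) (θ : ℝ) : ℝ :=
  θ ^ s * (1 - θ) ^ (t - s) * π θ / margLik π t s

/-- Posterior coverage of the interval `[a-h, a+h]` cropped to `[0,1]`. -/
noncomputable def covFn (h : ℝ) (π : ℝ → ℝ) (t s : ℕ) (a : ℝ) : ℝ :=
  ∫ θ in Ioc (max (a - h) 0) (min (a + h) 1), postDens π t s θ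

/-- Optimal conditional complementary coverage probability `𝒞_t(s)`. -/
noncomputable def Copt (h : ℝ) (π : ℝ → ℝ) (t s : ℕ) : ℝ :=
  1 - sSup (covFn h π t s '' Icc 0 1)

/-- Predictive probability `g_{t+1}(s) = m_{t+1}(s+1)/m_t(s)`. -/
noncomputable def gpred (π : ℝ → ℝ) (t s : ℕ) : ℝ :=
  margLik π (t + 1) (s + 1) / margLik π t s

/-- The Beta function `B(p,q) = ∫_0^1 x^(p-1) (1-x)^(q-1) dx`. -/
noncomputable def betaFn (p q : ℝ) : ℝ :=
  ∫ x in Ioc (0:ℝ) 1, x ^ (p - 1) * (1 - x) ^ (q - 1)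

/-- `n_a`: integer part `⌊a⌋` if `a` is not an integer, and `a - 1` if `a` is
an integer. -/
noncomputable def nA (a : ℝ) : ℝ :=
  if (⌊a⌋ : ℝ) = a then a - 1 else (⌊a⌋ : ℝ)

/-- `δ_a`: fractional part `a - ⌊a⌋` if `a` is not an integer, and `1` if `a`
is an integer. -/
noncomputable def deltaA (a : ℝ) : ℝ :=
  if (⌊a⌋ : ℝ) = a then 1 else a - (⌊a⌋ : ℝ)

open ProbabilityTheory

/-!
With a Beta prior the posterior is again a Beta distribution, so everything reduces to bounding
from below the two tails of a `Beta(p, q)` law outside an interval of length at most `2h`.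
The Beta laws have monotone likelihood ratio: raising `p` and lowering `q` thins the left tail.
Moving to `Beta(p + q - d, d)`, where `0 < d ≤ 1` and `d ≤ q`, keeps `p + q` and makes the factor
`(1 - x) ^ (d - 1)` at least `1`, so that the left tail is at least a pure power integral; its
normalising constant is controlled by convexity of `Γ`. The right tail follows by reflection, and
convexity of `x ↦ x ^ (p + q - d)` makes the symmetric split of the uncovered length the worst case.
-/

section MonotoneLikelihoodRatio

variable {α : Type*} [LinearOrder α] [MeasurableSpace α] {μ : Measure α}

lemma setIntegral_mul_integral_le_of_cross_mul_le {f g : α → ℝ} {S : Set α}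
    (hS : MeasurableSet S) (hlower : IsLowerSet S) (hf : Integrable f μ) (hg : Integrable g μ)
    (hfg : ∀ ⦃x y⦄, x < y → g x * f y ≤ f x * g y) :
    (∫ x in S, g x ∂μ) * ∫ x, f x ∂μ ≤ (∫ x in S, f x ∂μ) * ∫ x, g x ∂μ := by
  have hcross : (∫ x in S, g x ∂μ) * ∫ y in Sᶜ, f y ∂μ ≤
      (∫ x in S, f x ∂μ) * ∫ y in Sᶜ, g y ∂μ := by
    rw [← integral_const_mul, ← integral_const_mul]
    refine setIntegral_mono_on (hf.integrableOn.const_mul _) (hg.integrableOn.const_mul _)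
      hS.compl fun y hy => ?_
    rw [← integral_mul_const, ← integral_mul_const]
    refine setIntegral_mono_on (hg.integrableOn.mul_const _) (hf.integrableOn.mul_const _)
      hS fun x hx => hfg ?_
    exact lt_of_not_ge fun hyx => hy (hlower hyx hx)
  rw [← integral_add_compl hS hf, ← integral_add_compl hS hg]
  linarith

end MonotoneLikelihoodRatio

section BetaDistribution

variable {p q : ℝ}

lemma betaPDFReal_of_mem_Ioo {x : ℝ} (hx : x ∈ Ioo 0 1) :
    betaPDFReal p q x = x ^ (p - 1) * (1 - x) ^ (q - 1) / beta p q := by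
  rw [betaPDFReal, if_pos (mem_Ioo.1 hx)]
  ring

lemma betaPDFReal_of_notMem_Ioo {x : ℝ} (hx : x ∉ Ioo 0 1) : betaPDFReal p q x = 0 :=
  if_neg hx

lemma betaPDFReal_nonneg (hp : 0 < p) (hq : 0 < q) (x : ℝ) : 0 ≤ betaPDFReal p q x := by
  by_cases hx : x ∈ Ioo 0 1
  · exact (betaPDFReal_pos hx.1 hx.2 hp hq).le
  · exact (betaPDFReal_of_notMem_Ioo hx).ge

lemma integrable_betaPDFReal (hp : 0 < p) (hq : 0 < q) : Integrable (betaPDFReal p q) := by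
  refine ⟨(stronglyMeasurable_betaPDFReal p q).aestronglyMeasurable, ?_⟩
  rw [hasFiniteIntegral_iff_ofReal (ae_of_all _ (betaPDFReal_nonneg hp hq))]
  exact (lintegral_betaPDF_eq_one hp hq).trans_lt ENNReal.one_lt_top

lemma betaMeasure_real_eq_setIntegral (hp : 0 < p) (hq : 0 < q) {S : Set ℝ}
    (hS : MeasurableSet S) : (betaMeasure p q).real S = ∫ x in S, betaPDFReal p q x := by
  rw [integral_eq_lintegral_of_nonneg_ae (ae_of_all _ (betaPDFReal_nonneg hp hq))
    (stronglyMeasurable_betaPDFReal p q).aestronglyMeasurable, measureReal_def, betaMeasure,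
    withDensity_apply _ hS]
  rfl

lemma integral_betaPDFReal (hp : 0 < p) (hq : 0 < q) : ∫ x, betaPDFReal p q x = 1 := by
  have := isProbabilityMeasureBeta hp hq
  rw [← setIntegral_univ, ← betaMeasure_real_eq_setIntegral hp hq .univ, probReal_univ]

lemma setIntegral_Ioo_betaPDFReal (hp : 0 < p) (hq : 0 < q) :
    ∫ x in Ioo 0 1, betaPDFReal p q x = 1 := by
  rw [setIntegral_eq_integral_of_forall_compl_eq_zero fun _ => betaPDFReal_of_notMem_Ioo,
    integral_betaPDFReal hp hq]

lemma betaPDFReal_one_sub (x : ℝ) : betaPDFReal q p (1 - x) = betaPDFReal p q x := by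
  have hbeta : beta q p = beta p q := by rw [beta, beta, mul_comm, add_comm]
  by_cases hx : x ∈ Ioo 0 1
  · rw [betaPDFReal_of_mem_Ioo hx, betaPDFReal_of_mem_Ioo ⟨by linarith [hx.2], by linarith [hx.1]⟩,
      hbeta, sub_sub_cancel, mul_comm]
  · rw [betaPDFReal_of_notMem_Ioo hx, betaPDFReal_of_notMem_Ioo fun hx' => hx
      ⟨by linarith [hx'.2], by linarith [hx'.1]⟩]

lemma betaMeasure_preimage_one_sub {S : Set ℝ} (hS : MeasurableSet S) :
    betaMeasure p q ((1 - ·) ⁻¹' S) = betaMeasure q p S := by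
  have hsub : MeasurePreserving (fun x : ℝ => 1 - x) := Measure.measurePreserving_sub_left volume 1
  have hpdf : Measurable (betaPDF q p) := (measurable_betaPDFReal q p).ennreal_ofReal
  rw [betaMeasure, betaMeasure, withDensity_apply _ (hsub.measurable hS), withDensity_apply _ hS,
    ← hsub.setLIntegral_comp_preimage hS hpdf]
  simp only [betaPDF, betaPDFReal_one_sub]

lemma betaPDFReal_mul_betaPDFReal_le {p' q' x y : ℝ} (hp : 0 < p) (hpp' : p ≤ p') (hq' : 0 < q')
    (hq'q : q' ≤ q) (hxy : x < y) :
    betaPDFReal p' q' x * betaPDFReal p q y ≤ betaPDFReal p q x * betaPDFReal p' q' y := by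
  by_cases hx : x ∈ Ioo 0 1
  swap; · simp [betaPDFReal_of_notMem_Ioo hx]
  by_cases hy : y ∈ Ioo 0 1
  swap; · simp [betaPDFReal_of_notMem_Ioo hy]
  have hx1 : 0 < 1 - x := by linarith [hx.2]
  have hy1 : 0 < 1 - y := by linarith [hy.2]
  have hratio : x ^ (p' - p) * (1 - y) ^ (q - q') ≤ y ^ (p' - p) * (1 - x) ^ (q - q') := by
    have hx0 := hx.1.le
    have hy0 := hy.1.le
    exact mul_le_mul (Real.rpow_le_rpow hx0 hxy.le (by linarith))
      (Real.rpow_le_rpow hy1.le (by linarith) (by linarith)) (by positivity) (by positivity)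
  have hsplit : ∀ {z r r' : ℝ}, 0 < z → z ^ (r' - 1) = z ^ (r - 1) * z ^ (r' - r) := by
    intro z r r' hz
    rw [← Real.rpow_add hz]
    ring_nf
  have hweight : 0 ≤ x ^ (p - 1) * y ^ (p - 1) * (1 - x) ^ (q' - 1) * (1 - y) ^ (q' - 1) /
      (beta p q * beta p' q') := by
    have := beta_pos hp (hq'.trans_le hq'q)
    have := beta_pos (hp.trans_le hpp') hq'
    have := hx.1
    have := hy.1
    positivity
  simp only [betaPDFReal_of_mem_Ioo hx, betaPDFReal_of_mem_Ioo hy, hsplit (r := p) (r' := p') hx.1,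
    hsplit (r := p) (r' := p') hy.1, hsplit (r := q') (r' := q) hx1,
    hsplit (r := q') (r' := q) hy1]
  refine le_of_eq_of_le ?_ ((mul_le_mul_of_nonneg_left hratio hweight).trans_eq ?_) <;> ring

lemma betaMeasure_real_anti_of_isLowerSet {p' q' : ℝ} (hp : 0 < p) (hpp' : p ≤ p') (hq' : 0 < q')
    (hq'q : q' ≤ q) {S : Set ℝ} (hS : MeasurableSet S) (hlower : IsLowerSet S) :
    (betaMeasure p' q').real S ≤ (betaMeasure p q).real S := by
  have hp' : 0 < p' := hp.trans_le hpp'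
  have hq : 0 < q := hq'.trans_le hq'q
  have hmul := setIntegral_mul_integral_le_of_cross_mul_le hS hlower (integrable_betaPDFReal hp hq)
    (integrable_betaPDFReal hp' hq') fun _ _ => betaPDFReal_mul_betaPDFReal_le hp hpp' hq' hq'q
  rwa [integral_betaPDFReal hp hq, integral_betaPDFReal hp' hq', mul_one, mul_one,
    ← betaMeasure_real_eq_setIntegral hp hq hS,
    ← betaMeasure_real_eq_setIntegral hp' hq' hS] at hmul

end BetaDistribution

section Tails

lemma Gamma_le_Gamma_add_one {x y : ℝ} (hx : 1 ≤ x) (hy : y ∈ Icc x (x + 1)) :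
    Real.Gamma y ≤ Real.Gamma (x + 1) := by
  have hx0 : 0 < x := by linarith
  have hmono : Real.Gamma x ≤ Real.Gamma (x + 1) := by
    rw [Real.Gamma_add_one hx0.ne']
    exact le_mul_of_one_le_left (Real.Gamma_pos_of_pos hx0).le hx
  exact (Real.convexOn_Gamma.le_max_of_mem_Icc hx0 (by simpa using by linarith) hy).trans
    (max_le hmono le_rfl)

lemma mul_beta_sub_le {s d : ℝ} (hs : 1 ≤ s) (hd : 0 < d) (hd1 : d ≤ 1) (hds : d < s) :
    (s - d) * beta (s - d) d ≤ s * Real.Gamma d := by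
  have hs0 : 0 < s := by linarith
  have := Real.Gamma_pos_of_pos hs0
  have := Real.Gamma_pos_of_pos hd
  calc (s - d) * beta (s - d) d
      = Real.Gamma (s - d + 1) * Real.Gamma d / Real.Gamma s := by
        rw [beta, sub_add_cancel, Real.Gamma_add_one (sub_pos.2 hds).ne']
        ring
    _ ≤ Real.Gamma (s + 1) * Real.Gamma d / Real.Gamma s := by
        gcongr
        exact Gamma_le_Gamma_add_one hs ⟨by linarith, by linarith⟩
    _ = s * Real.Gamma d := by
        rw [Real.Gamma_add_one hs0.ne']
        field_simp

lemma rpow_div_mul_beta_le_betaMeasure_real_Iio {p d u : ℝ} (hp : 0 < p) (hd : 0 < d)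
    (hd1 : d ≤ 1) (hu : u ∈ Icc 0 1) :
    u ^ p / (p * beta p d) ≤ (betaMeasure p d).real (Iio u) := by
  have hbeta : 0 < beta p d := beta_pos hp hd
  have := isProbabilityMeasureBeta hp hd
  have hpow : IntegrableOn (fun x : ℝ => x ^ (p - 1)) (Ioo 0 u) :=
    (intervalIntegral.intervalIntegrable_rpow' (by linarith)).1.mono_set Ioo_subset_Ioc_self
  calc u ^ p / (p * beta p d) = ∫ x in Ioo 0 u, x ^ (p - 1) / beta p d := by
        rw [integral_div, ← integral_Ioc_eq_integral_Ioo, ← intervalIntegral.integral_of_le hu.1,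
          integral_rpow (Or.inl (by linarith)), sub_add_cancel, Real.zero_rpow hp.ne', sub_zero,
          div_div]
    _ ≤ ∫ x in Ioo 0 u, betaPDFReal p d x := by
        refine setIntegral_mono_on (hpow.div_const _) (integrable_betaPDFReal hp hd).integrableOn
          measurableSet_Ioo fun x hx => ?_
        have hx1 : 0 < 1 - x := by linarith [hx.2, hu.2]
        rw [betaPDFReal_of_mem_Ioo ⟨hx.1, by linarith⟩]
        gcongr
        refine le_mul_of_one_le_right (Real.rpow_nonneg hx.1.le _) ?_
        exact Real.one_le_rpow_of_pos_of_le_one_of_nonpos hx1 (by linarith [hx.1]) (by linarith)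
    _ = (betaMeasure p d).real (Ioo 0 u) :=
        (betaMeasure_real_eq_setIntegral hp hd measurableSet_Ioo).symm
    _ ≤ (betaMeasure p d).real (Iio u) := measureReal_mono Ioo_subset_Iio_self

variable {p q d : ℝ}

lemma rpow_div_le_betaMeasure_real_Iio {u : ℝ} (hp : 0 < p) (hd : 0 < d) (hd1 : d ≤ 1)
    (hdq : d ≤ q) (hpq : 1 ≤ p + q) (hu : u ∈ Icc 0 1) :
    u ^ (p + q - d) / ((p + q) * Real.Gamma d) ≤ (betaMeasure p q).real (Iio u) := by
  have hpqd : 0 < p + q - d := by linarith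
  calc u ^ (p + q - d) / ((p + q) * Real.Gamma d)
      ≤ u ^ (p + q - d) / ((p + q - d) * beta (p + q - d) d) :=
        div_le_div_of_nonneg_left (Real.rpow_nonneg hu.1 _) (mul_pos hpqd (beta_pos hpqd hd))
          (mul_beta_sub_le hpq hd hd1 (by linarith))
    _ ≤ (betaMeasure (p + q - d) d).real (Iio u) :=
        rpow_div_mul_beta_le_betaMeasure_real_Iio hpqd hd hd1 hu
    _ ≤ (betaMeasure p q).real (Iio u) :=
        betaMeasure_real_anti_of_isLowerSet hp (by linarith) hd hdq measurableSet_Iio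
          (isLowerSet_Iio u)

lemma rpow_div_le_betaMeasure_real_Ioi {u : ℝ} (hq : 0 < q) (hd : 0 < d) (hd1 : d ≤ 1)
    (hdp : d ≤ p) (hpq : 1 ≤ p + q) (hu : u ∈ Icc 0 1) :
    (1 - u) ^ (p + q - d) / ((p + q) * Real.Gamma d) ≤ (betaMeasure p q).real (Ioi u) := by
  have hpre : (1 - ·) ⁻¹' Iio (1 - u) = Ioi u := by simp
  rw [← hpre, measureReal_def, betaMeasure_preimage_one_sub measurableSet_Iio, add_comm p q]
  exact rpow_div_le_betaMeasure_real_Iio hq hd hd1 hdp (by linarith)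
    ⟨by linarith [hu.2], by linarith [hu.1]⟩

lemma two_mul_rpow_half_add_le {x y r : ℝ} (hx : 0 ≤ x) (hy : 0 ≤ y) (hr : 1 ≤ r) :
    2 * ((x + y) / 2) ^ r ≤ x ^ r + y ^ r := by
  have hconv := (convexOn_rpow hr).2 (mem_Ici.2 hx) (mem_Ici.2 hy) (by norm_num : (0 : ℝ) ≤ 1 / 2)
    (by norm_num : (0 : ℝ) ≤ 1 / 2) (by norm_num)
  simp only [smul_eq_mul] at hconv
  rw [show (x + y) / 2 = 1 / 2 * x + 1 / 2 * y by ring]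
  linarith

lemma betaMeasure_real_Ioc_le {l r : ℝ} (hd : 0 < d) (hd1 : d ≤ 1) (hdp : d ≤ p) (hdq : d ≤ q)
    (hpqd : 1 ≤ p + q - d) (hl : 0 ≤ l) (hlr : l ≤ r) (hr : r ≤ 1) :
    (betaMeasure p q).real (Ioc l r) ≤
      1 - 2 * ((1 - (r - l)) / 2) ^ (p + q - d) / ((p + q) * Real.Gamma d) := by
  have hp : 0 < p := hd.trans_le hdp
  have hq : 0 < q := hd.trans_le hdq
  have := Real.Gamma_pos_of_pos hd
  have := isProbabilityMeasureBeta hp hq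
  have htotal : (betaMeasure p q).real (Iio l) + (betaMeasure p q).real (Ioc l r) +
      (betaMeasure p q).real (Ioi r) ≤ 1 := by
    rw [← measureReal_union (disjoint_left.2 fun x hx hx' => hx.not_gt hx'.1) measurableSet_Ioc,
      ← measureReal_union (disjoint_left.2 fun x hx hx' => ?_) measurableSet_Ioi]
    · exact measureReal_le_one
    · rcases hx with hx | hx
      · exact (hlr.trans_lt hx').not_gt hx
      · exact hx.2.not_gt hx'
  have hleft := rpow_div_le_betaMeasure_real_Iio hp hd hd1 hdq (by linarith) ⟨hl, hlr.trans hr⟩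
  have hright := rpow_div_le_betaMeasure_real_Ioi hq hd hd1 hdp (by linarith) ⟨hl.trans hlr, hr⟩
  have hconvex : 2 * ((1 - (r - l)) / 2) ^ (p + q - d) / ((p + q) * Real.Gamma d) ≤
      (l ^ (p + q - d) + (1 - r) ^ (p + q - d)) / ((p + q) * Real.Gamma d) := by
    rw [show 1 - (r - l) = l + (1 - r) by ring]
    gcongr
    exact two_mul_rpow_half_add_le hl (sub_nonneg.2 hr) hpqd
  rw [add_div] at hconvex
  linarith

end Tails

section Posterior

variable {a b : ℝ} (t s : ℕ)

/-- The Beta prior density with parameters `a` and `b`, in unrestricted form: unlike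
`ProbabilityTheory.betaPDFReal`, it is not cut off to zero outside `(0, 1)`. -/
noncomputable def betaPrior (a b θ : ℝ) : ℝ :=
  θ ^ (a - 1) * (1 - θ) ^ (b - 1) / betaFn a b

lemma betaFn_eq_beta (ha : 0 < a) (hb : 0 < b) : betaFn a b = beta a b := by
  have hdiv : betaFn a b / beta a b = 1 := by
    rw [betaFn, integral_Ioc_eq_integral_Ioo, ← integral_div]
    exact (setIntegral_congr_fun measurableSet_Ioo
      fun x hx => (betaPDFReal_of_mem_Ioo hx).symm).trans (setIntegral_Ioo_betaPDFReal ha hb)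
  rwa [div_eq_one_iff_eq (beta_pos ha hb).ne'] at hdiv

lemma pow_mul_pow_mul_betaPrior (ha : 0 < a) (hb : 0 < b) {θ : ℝ} (hθ : θ ∈ Ioo 0 1) :
    θ ^ s * (1 - θ) ^ (t - s) * betaPrior a b θ =
      beta (a + s) (b + (t - s : ℕ)) / beta a b *
        betaPDFReal (a + s) (b + (t - s : ℕ)) θ := by
  have hbeta : beta (a + s) (b + (t - s : ℕ)) ≠ 0 :=
    (beta_pos (by positivity) (by positivity)).ne'
  rw [betaPDFReal_of_mem_Ioo hθ, betaPrior, betaFn_eq_beta ha hb, add_sub_right_comm a,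
    add_sub_right_comm b, Real.rpow_add_natCast hθ.1.ne',
    Real.rpow_add_natCast (sub_pos.2 hθ.2).ne']
  field_simp

lemma margLik_betaPrior (ha : 0 < a) (hb : 0 < b) :
    margLik (betaPrior a b) t s = beta (a + s) (b + (t - s : ℕ)) / beta a b := by
  rw [margLik, integral_Ioc_eq_integral_Ioo, setIntegral_congr_fun measurableSet_Ioo
    fun θ hθ => pow_mul_pow_mul_betaPrior t s ha hb hθ, integral_const_mul,
    setIntegral_Ioo_betaPDFReal (by positivity) (by positivity), mul_one]

lemma postDens_betaPrior (ha : 0 < a) (hb : 0 < b) {θ : ℝ} (hθ : θ ∈ Ioo 0 1) :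
    postDens (betaPrior a b) t s θ = betaPDFReal (a + s) (b + (t - s : ℕ)) θ := by
  have hmarg : beta (a + s) (b + (t - s : ℕ)) / beta a b ≠ 0 :=
    (div_pos (beta_pos (by positivity) (by positivity)) (beta_pos ha hb)).ne'
  rw [postDens, pow_mul_pow_mul_betaPrior t s ha hb hθ, margLik_betaPrior t s ha hb,
    mul_div_cancel_left₀ _ hmarg]

lemma covFn_betaPrior (ha : 0 < a) (hb : 0 < b) (h c : ℝ) :
    covFn h (betaPrior a b) t s c =
      (betaMeasure (a + s) (b + (t - s : ℕ))).real (Ioc (max (c - h) 0) (min (c + h) 1)) := by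
  rw [covFn, betaMeasure_real_eq_setIntegral (by positivity) (by positivity) measurableSet_Ioc,
    integral_Ioc_eq_integral_Ioo, integral_Ioc_eq_integral_Ioo]
  exact setIntegral_congr_fun measurableSet_Ioo fun θ hθ => postDens_betaPrior t s ha hb
    ⟨(le_max_right _ _).trans_lt hθ.1, hθ.2.trans_le (min_le_right _ _)⟩

end Posterior

lemma nA_add_deltaA (a : ℝ) : nA a + deltaA a = a := by
  unfold nA deltaA
  split_ifs <;> ring

lemma deltaA_pos (a : ℝ) : 0 < deltaA a := by
  unfold deltaA
  split_ifs with hint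
  · exact one_pos
  · exact sub_pos.2 (lt_of_le_of_ne (Int.floor_le a) hint)

lemma deltaA_le_one (a : ℝ) : deltaA a ≤ 1 := by
  unfold deltaA
  split_ifs
  · exact le_rfl
  · linarith [Int.lt_floor_add_one a]

lemma nA_nonneg {a : ℝ} (ha : 0 < a) : 0 ≤ nA a := by
  unfold nA
  split_ifs with hint
  · have hfloor : 0 < ⌊a⌋ := by exact_mod_cast hint.symm ▸ ha
    rw [← hint, sub_nonneg]
    exact_mod_cast hfloor
  · exact_mod_cast Int.floor_nonneg.2 ha.le

lemma deltaA_le_self {a : ℝ} (ha : 0 < a) : deltaA a ≤ a := by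
  linarith [nA_nonneg ha, nA_add_deltaA a]

lemma quarter_sub_sq_rpow_mul_half_sub_rpow_le {h d m : ℝ} (hh : |h| < 1 / 2) (hd : 0 ≤ d) :
    (0.25 - h ^ 2) ^ d * (0.5 - h) ^ m ≤ (1 / 2 - h) ^ (m + d) := by
  obtain ⟨hlower, hupper⟩ := abs_lt.1 hh
  have hpos : 0 < 1 / 2 - h := by linarith
  have hle : 0.25 - h ^ 2 ≤ 1 / 2 - h := by nlinarith
  have hnonneg : 0 ≤ 0.25 - h ^ 2 := by nlinarith
  rw [add_comm, Real.rpow_add hpos, show (0.5 : ℝ) = 1 / 2 by norm_num]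
  gcongr

lemma nA_deltaA_bound_le {h a t : ℝ} (hh : |h| < 1 / 2) (ha : 0 < a) (ht : 0 ≤ t) :
    2 * (0.25 - h ^ 2) ^ deltaA a * (0.5 - h) ^ (t + 2 * nA a) /
        ((t + 2 * nA a + 2 * deltaA a) * Real.Gamma (deltaA a)) ≤
      2 * (1 / 2 - h) ^ (t + a + a - deltaA a) / ((t + a + a) * Real.Gamma (deltaA a)) := by
  have := Real.Gamma_pos_of_pos (deltaA_pos a)
  have hsum := nA_add_deltaA a
  have hdenom : t + 2 * nA a + 2 * deltaA a = t + a + a := by linarith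
  have hexp : t + 2 * nA a + deltaA a = t + a + a - deltaA a := by linarith
  rw [mul_assoc 2, hdenom, ← hexp]
  gcongr
  exact quarter_sub_sq_rpow_mul_half_sub_rpow_le hh (deltaA_pos a).le

theorem Copt_lower_bound_beta_prior_general {h a b d : ℝ} (hh0 : 0 ≤ h) (hh1 : h ≤ 1 / 2)
    (hd : 0 < d) (hd1 : d ≤ 1) (hda : d ≤ a) (hdb : d ≤ b) {t s : ℕ} (hs : s ≤ t)
    (habd : 1 ≤ t + a + b - d) :
    2 * (1 / 2 - h) ^ (t + a + b - d) / ((t + a + b) * Real.Gamma d) ≤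
      Copt h (betaPrior a b) t s := by
  rw [Copt, le_sub_comm]
  refine csSup_le (nonempty_Icc.2 zero_le_one |>.image _) ?_
  rintro _ ⟨c, ⟨hc0, hc1⟩, rfl⟩
  rw [covFn_betaPrior t s (hd.trans_le hda) (hd.trans_le hdb)]
  have hsum : a + s + (b + (t - s : ℕ)) = t + a + b := by
    push_cast [hs]
    ring
  have hcov := betaMeasure_real_Ioc_le (p := a + s) (q := b + (t - s : ℕ)) hd hd1
    (le_add_of_le_of_nonneg hda s.cast_nonneg) (le_add_of_le_of_nonneg hdb (t - s).cast_nonneg)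
    (by rwa [hsum]) (le_max_right (c - h) 0)
    (max_le (le_min (by linarith) (by linarith)) (le_min (by linarith) zero_le_one))
    (min_le_right (c + h) 1)
  rw [hsum] at hcov
  refine hcov.trans (sub_le_sub_left ?_ 1)
  have hlength : min (c + h) 1 - max (c - h) 0 ≤ 2 * h := by
    linarith [min_le_left (c + h) 1, le_max_left (c - h) 0]
  have hdenom : 0 < (t + a + b) * Real.Gamma d :=
    mul_pos (by linarith) (Real.Gamma_pos_of_pos hd)
  gcongr
  linarith

/-- for the Beta(a,a) prior, a lower bound on the optimal
conditional complementary coverage probability for every `t ≥ 1`. -/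
theorem Copt_lower_bound_beta_prior (h : ℝ) (hh : 0 < h ∧ h < 1 / 2)
    (a : ℝ) (ha : 0 < a) :
    ∀ t : ℕ, 1 ≤ t → ∀ s : ℕ, s ≤ t →
      2 * (0.25 - h ^ 2) ^ deltaA a * (0.5 - h) ^ ((t : ℝ) + 2 * nA a) /
          (((t : ℝ) + 2 * nA a + 2 * deltaA a) * Real.Gamma (deltaA a))
        ≤ Copt h (fun θ => θ ^ (a - 1) * (1 - θ) ^ (a - 1) / betaFn a a) t s := by
  intro t ht s hs
  have ht1 : (1 : ℝ) ≤ t := by exact_mod_cast ht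
  have hda : deltaA a ≤ a := deltaA_le_self ha
  exact (nA_deltaA_bound_le (abs_lt.2 ⟨by linarith, hh.2⟩) ha t.cast_nonneg).trans
    (Copt_lower_bound_beta_prior_general hh.1.le hh.2.le (deltaA_pos a) (deltaA_le_one a)
      hda hda hs (by linarith))
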